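/- For all nonnegative integers m and n, D(m,n) = Σ_{0 ≤ ℓ ≤ n} c(n − ℓ) · M(m − n, ℓ), where D(m,n) := π(m,n) − π(m−1,n) with π(−1,n) := 0. -/

import Mathlib

open Finset

/-- A pair of sequences of parts is *steadily decreasing* if
`min (a i) (b i) ≥ max (a (i+1)) (b (i+1))` for all `i`. -/
noncomputable def SteadilyDecreasing (a b : ℕ → ℕ) : Prop :=
  ∀ i, max (a (i + 1)) (b (i + 1)) ≤ min (a i) (b i)

/-- `bipartitePi m n` is the number of pairs of partitions (given as non-increasing,
finitely supported sequences) of the bipartite number `(m, n)` with steadily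
decreasing parts. -/
noncomputable def bipartitePi (m n : ℕ) : ℕ :=
  Nat.card {p : (ℕ →₀ ℕ) × (ℕ →₀ ℕ) //
    (∀ i, p.1 (i + 1) ≤ p.1 i) ∧ (∀ i, p.2 (i + 1) ≤ p.2 i) ∧
    SteadilyDecreasing p.1 p.2 ∧
    (p.1.sum fun _ x => x) = m ∧ (p.2.sum fun _ x => x) = n}

/-- The partition function `p n`. -/
noncomputable def partitionCount (n : ℕ) : ℕ := Nat.card (Nat.Partition n)

/-- The partition function extended to the integers, with `p r = 0` for `r < 0`. -/
noncomputable def partitionCountInt (r : ℤ) : ℕ := if 0 ≤ r then partitionCount r.toNat else 0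

/-- The cubic partition function `c n`, counting partitions of `n` in which even
parts come in two colors (equivalently, pairs of a partition together with a
partition into even parts, of total size `n`). -/
noncomputable def cubicPartition (n : ℕ) : ℕ :=
  Nat.card {p : Multiset ℕ × Multiset ℕ //
    (∀ i ∈ p.1, 0 < i) ∧ (∀ i ∈ p.2, 0 < i ∧ Even i) ∧ p.1.sum + p.2.sum = n}

/-- The Andrews–Garvan crank of a partition: the largest part if there are no ones,
and otherwise the number of parts larger than the number of ones minus the number of
ones. -/
noncomputable def crank {n : ℕ} (l : n.Partition) : ℤ :=
  if l.parts.count 1 = 0 then (l.parts.sup : ℤ)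
  else ((l.parts.filter fun p => l.parts.count 1 < p).card : ℤ) - l.parts.count 1

/-- `crankM m n` is the crank counting function `M(m, n)`: the number of partitions
of `n` with crank `m`, with the standard convention at `n = 1`
(`M(0,1) = -1`, `M(±1,1) = 1`, `M(m,1) = 0` otherwise). -/
noncomputable def crankM (m : ℤ) (n : ℕ) : ℤ :=
  if n = 1 then (if m = 0 then -1 else if m.natAbs = 1 then 1 else 0)
  else (Nat.card {l : n.Partition // crank l = m} : ℤ)

/-- `alphaBip s k = Σ_{ℓ ≥ 0} (-1)^ℓ p(k - ℓ(ℓ+1)/2 - ℓ s)`. -/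
noncomputable def alphaBip (s k : ℕ) : ℤ :=
  ∑' ℓ : ℕ, (-1 : ℤ) ^ ℓ *
    (partitionCountInt ((k : ℤ) - ℓ * (ℓ + 1) / 2 - ℓ * s) : ℤ)

/-- `Dbip m n = π(m,n) - π(m-1,n)`, with `π(-1,n) := 0`. -/
noncomputable def Dbip (m n : ℕ) : ℤ :=
  (bipartitePi m n : ℤ) - if m = 0 then 0 else (bipartitePi (m - 1) n : ℤ)

/-!
Removing both first parts of a pair `(α, β)` with steadily decreasing parts leaves another
such pair, whose largest part the first parts exceed by two arbitrary amounts. Iterating this gives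
a product formula for the generating function of such pairs. In the difference `D(m, n)` the
excess of the first part of `α` drops out, so that, with `x` marking `m`, `y` marking `n` and
`q = xy`, the generating function of `D` is `(q; q²) / ((xq; q) (y; q) (q; q))`.

For `x = z` and `y = z⁻¹ q` this is `1 / ((q; q) (q²; q²))` times `(q; q) / ((zq; q) (z⁻¹q; q))`,
the generating functions of cubic partitions and of the crank. The latter follows from the
combinatorial definition of the crank by sorting partitions by their number of ones and applying
the `q`-binomial theorem. Comparing coefficients of `z ^ (m - n) q ^ n` gives the theorem.
-/

open PowerSeries PowerSeries.WithPiTopology LaurentPolynomial Filter Topology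

/-! ### Formal convergence -/

section Convergence

variable {R : Type*} [CommRing R] [TopologicalSpace R] {ι : Type*}

theorem summable_of_X_pow_dvd {f : ι → R⟦X⟧} {w : ι → ℕ} (hw : Tendsto w cofinite atTop)
    (hf : ∀ i, X ^ w i ∣ f i) : Summable f := by
  refine (summable_iff_summable_coeff R).2 fun n ↦ summable_of_hasFiniteSupport ?_
  refine (eventually_cofinite.1 (hw.eventually_gt_atTop n)).subset fun i hi hlt ↦ hi ?_
  exact X_pow_dvd_iff.1 (hf i) n hlt

theorem multipliable_one_sub_of_X_pow_dvd {f : ℕ → R⟦X⟧} (hf : ∀ j, X ^ j ∣ f j) :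
    Multipliable fun j ↦ 1 - f j := by
  simp_rw [sub_eq_add_neg]
  refine multipliable_one_add_of_tendsto_order_atTop_nhds_top R <|
    ENat.tendsto_nhds_top_iff_natCast_lt.2 fun n ↦ ?_
  filter_upwards [eventually_gt_atTop n] with j hj
  rw [order_neg]
  exact (Nat.cast_lt.2 hj).trans_le (nat_le_order _ _ (X_pow_dvd_iff.1 (hf j)))

theorem tendsto_of_X_pow_dvd_sub {F : ℕ → R⟦X⟧} {L : R⟦X⟧} (h : ∀ n, X ^ n ∣ F n - L) :
    Tendsto F atTop (𝓝 L) := by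
  refine (tendsto_iff_coeff_tendsto R F atTop L).2 fun d ↦ ?_
  refine tendsto_const_nhds.congr' ?_
  filter_upwards [eventually_gt_atTop d] with n hn
  have := X_pow_dvd_iff.1 (h n) d hn
  rwa [map_sub, sub_eq_zero, eq_comm] at this

variable [DiscreteTopology R]

theorem X_pow_dvd_tsum {f : ι → R⟦X⟧} {n : ℕ} (h : ∀ i, X ^ n ∣ f i) : X ^ n ∣ ∑' i, f i := by
  by_cases hf : Summable f
  · refine X_pow_dvd_iff.2 fun d hd ↦ ?_
    refine ((hasSum_iff_hasSum_coeff R).1 hf.hasSum d).unique ?_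
    simpa only [X_pow_dvd_iff.1 (h _) d hd] using hasSum_zero
  · rw [tsum_eq_zero_of_not_summable hf]
    exact dvd_zero _

theorem X_pow_dvd_tsum_sub {f : ι → R⟦X⟧} (hf : Summable f) (i₀ : ι) {n : ℕ}
    (h : ∀ i ≠ i₀, X ^ n ∣ f i) : X ^ n ∣ ∑' i, f i - f i₀ := by
  classical
  rw [hf.tsum_eq_add_tsum_ite i₀, add_sub_cancel_left]
  refine X_pow_dvd_tsum fun i ↦ ?_
  split_ifs with hi
  exacts [dvd_zero _, h i hi]

end Convergence

theorem tendsto_id_cofinite_atTop : Tendsto (id : ℕ → ℕ) cofinite atTop :=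
  Nat.cofinite_eq_atTop ▸ tendsto_id

theorem tendsto_add_cofinite_atTop {ι κ : Type*} {v : ι → ℕ} {w : κ → ℕ}
    (hv : Tendsto v cofinite atTop) (hw : Tendsto w cofinite atTop) :
    Tendsto (fun p : ι × κ ↦ v p.1 + w p.2) cofinite atTop := by
  refine tendsto_atTop.2 fun n ↦ eventually_cofinite.2 ?_
  have hvn := eventually_cofinite.1 (tendsto_atTop.1 hv n)
  have hwn := eventually_cofinite.1 (tendsto_atTop.1 hw n)
  refine (hvn.prod hwn).subset fun p (hp : ¬ n ≤ v p.1 + w p.2) ↦ ⟨?_, ?_⟩ <;>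
  · change ¬ _
    lia

theorem tprod_mul_eq_tprod_mul_of_recurrence {M : Type*} [CommMonoid M] [TopologicalSpace M]
    [ContinuousMul M] [T2Space M] {a b F : ℕ → M} {L : M} (ha : Multipliable a)
    (hb : Multipliable b) (hF : Tendsto F atTop (𝓝 L)) (h : ∀ j, a j * F j = b j * F (j + 1)) :
    (∏' j, a j) * F 0 = (∏' j, b j) * L := by
  have hfin (n : ℕ) : (∏ j ∈ range n, a j) * F 0 = (∏ j ∈ range n, b j) * F n := by
    induction n with
    | zero => simp
    | succ n ih =>
      rw [prod_range_succ, prod_range_succ, mul_right_comm, ih, mul_right_comm, mul_assoc,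
        mul_assoc, h]
  refine tendsto_nhds_unique (ha.tendsto_prod_tprod_nat.mul_const (F 0)) ?_
  simpa only [hfin] using hb.tendsto_prod_tprod_nat.mul hF

/-! ### Infinite products -/

section QPochhammer

variable {R : Type*} [CommRing R] [TopologicalSpace R]

/-- The infinite `q`-Pochhammer symbol `(a; q)_∞` of formal power series. The product converges
when the constant coefficient of `q` vanishes. -/
noncomputable def qPochhammer (a q : R⟦X⟧) : R⟦X⟧ :=
  ∏' j, (1 - a * q ^ j)

theorem multipliable_qPochhammer (a : R⟦X⟧) {q : R⟦X⟧} (hq : X ∣ q) :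
    Multipliable fun j ↦ 1 - a * q ^ j :=
  multipliable_one_sub_of_X_pow_dvd fun j ↦ (pow_dvd_pow_of_dvd hq j).mul_left a

theorem summable_pow_mul {t : R⟦X⟧} (ht : X ∣ t) (A : ℕ → R⟦X⟧) : Summable fun k ↦ t ^ k * A k :=
  summable_of_X_pow_dvd tendsto_id_cofinite_atTop fun k ↦
    (pow_dvd_pow_of_dvd ht k).mul_right _

variable [DiscreteTopology R]

theorem qPochhammer_eq_one_sub_mul (a : R⟦X⟧) {q : R⟦X⟧} (hq : X ∣ q) :
    qPochhammer a q = (1 - a) * qPochhammer (a * q) q := by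
  have h : Multipliable fun j ↦ 1 - a * q ^ (j + 1) := by
    simpa only [mul_assoc, ← pow_succ'] using multipliable_qPochhammer (a * q) hq
  simpa only [qPochhammer, pow_zero, mul_one, mul_assoc, ← pow_succ'] using
    tprod_eq_zero_mul' (f := fun j ↦ 1 - a * q ^ j) h

theorem qPochhammer_sq_mul_qPochhammer_sq (a : R⟦X⟧) {q : R⟦X⟧} (hq : X ∣ q) :
    qPochhammer a (q ^ 2) * qPochhammer (a * q) (q ^ 2) = qPochhammer a q := by
  have hq2 : X ∣ q ^ 2 := dvd_pow hq two_ne_zero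
  have heven := multipliable_qPochhammer a hq2
  have hodd := multipliable_qPochhammer (a * q) hq2
  simp only [← pow_mul, mul_assoc, ← pow_succ'] at heven hodd
  simp only [qPochhammer, ← pow_mul, mul_assoc, ← pow_succ']
  exact tprod_even_mul_odd (f := fun j ↦ 1 - a * q ^ j) heven hodd

theorem one_sub_mul_tsum_pow {t : R⟦X⟧} (ht : X ∣ t) : (1 - t) * ∑' k, t ^ k = 1 :=
  one_sub_mul_tsum_pow_of_constantCoeff_eq_zero (X_dvd_iff.1 ht)

theorem one_sub_mul_tsum_pow_mul {a t : R⟦X⟧} {A : ℕ → R⟦X⟧} (ht : X ∣ t)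
    (hA : ∀ k, (1 - X ^ (k + 1)) * A (k + 1) = (1 - a * X ^ k) * A k) :
    (1 - t) * ∑' k, t ^ k * A k = (1 - a * t) * ∑' k, (t * X) ^ k * A k := by
  have hs := summable_pow_mul ht A
  have hsX := summable_pow_mul (ht.mul_right X) A
  have hsub : ∑' k, t ^ k * A k - ∑' k, (t * X) ^ k * A k =
      ∑' k, t ^ (k + 1) * ((1 - a * X ^ k) * A k) := by
    rw [← hs.tsum_sub hsX, (hs.sub hsX).tsum_eq_zero_add]
    simp only [pow_zero, sub_self, zero_add, ← hA]
    exact tsum_congr fun k ↦ by ring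
  have hsplit : t * ∑' k, t ^ k * A k - a * t * ∑' k, (t * X) ^ k * A k =
      ∑' k, t ^ (k + 1) * ((1 - a * X ^ k) * A k) := by
    rw [← hs.tsum_mul_left, ← hsX.tsum_mul_left, ← (hs.mul_left t).tsum_sub (hsX.mul_left _)]
    exact tsum_congr fun k ↦ by ring
  linear_combination hsub - hsplit

/-- The `q`-binomial theorem: the hypothesis says `A k = A 0 * (a; q)_k / (q; q)_k`. -/
theorem tsum_pow_mul_mul_qPochhammer {a t : R⟦X⟧} {A : ℕ → R⟦X⟧} (ht : X ∣ t)
    (hA : ∀ k, (1 - X ^ (k + 1)) * A (k + 1) = (1 - a * X ^ k) * A k) :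
    (∑' k, t ^ k * A k) * qPochhammer t X = A 0 * qPochhammer (a * t) X := by
  have htX (n : ℕ) : X ∣ t * X ^ n := ht.mul_right _
  have hlim : Tendsto (fun n ↦ ∑' k, (t * X ^ n) ^ k * A k) atTop (𝓝 (A 0)) := by
    refine tendsto_of_X_pow_dvd_sub fun n ↦ ?_
    simpa only [pow_zero, one_mul] using
      X_pow_dvd_tsum_sub (summable_pow_mul (htX n) A) 0 (n := n) fun k hk ↦
        ((dvd_mul_left _ _).trans (dvd_pow_self _ hk)).mul_right _
  have := tprod_mul_eq_tprod_mul_of_recurrence (multipliable_qPochhammer t dvd_rfl)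
    (multipliable_qPochhammer (a * t) dvd_rfl) hlim fun n ↦ by
      simpa only [mul_assoc, pow_succ] using one_sub_mul_tsum_pow_mul (htX n) hA
  rw [mul_comm, mul_comm (A 0)]
  simpa only [qPochhammer, pow_zero, mul_one] using this

end QPochhammer

/-! ### Weighted generating functions of partitions -/

theorem hasSum_of_hasSum_fiber {M ι κ : Type*} [AddCommMonoid M] [TopologicalSpace M]
    [ContinuousAdd M] [T3Space M] [DecidableEq κ] {f : ι → M} {g : κ → M} (c : ι → κ)
    (hf : Summable f) (h : ∀ k, HasSum (fun i ↦ if c i = k then f i else 0) (g k)) :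
    HasSum g (∑' i, f i) := by
  refine ((Equiv.sigmaFiberEquiv c).hasSum_iff.2 hf.hasSum).sigma fun k ↦ ?_
  refine (hasSum_subtype_iff_indicator (s := {i | c i = k})).2 ?_
  exact (h k).congr_fun fun i ↦ by simp only [Set.indicator_apply, Set.mem_ofPred_eq]

theorem tendsto_sum_map_succ_cofinite_atTop :
    Tendsto (fun s : Multiset ℕ ↦ (s.map (· + 1)).sum) cofinite atTop := by
  refine tendsto_atTop.2 fun n ↦ eventually_cofinite.2 ?_
  refine (Set.finite_Iic (n • Multiset.range n)).subset fun s (hs : ¬ n ≤ _) ↦ ?_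
  have hcard : s.card ≤ (s.map (· + 1)).sum := by simp [Multiset.sum_map_add]
  refine Multiset.le_iff_count.2 fun i ↦ ?_
  by_cases hi : i ∈ s
  · have hle : i + 1 ≤ (s.map (· + 1)).sum :=
      Multiset.le_sum_of_mem (Multiset.mem_map_of_mem (· + 1) hi)
    have hmem : i ∈ Multiset.range n := Multiset.mem_range.2 (by lia)
    rw [Multiset.count_nsmul, Multiset.count_eq_one_of_mem (Multiset.nodup_range n) hmem, mul_one]
    exact (Multiset.count_le_card i s).trans (by lia)
  · simp [Multiset.count_eq_zero_of_notMem hi]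

theorem piecewise_Iio_zero {A : Type*} (v u : ℕ → A) : (Set.Iio 0).piecewise v u = u := by
  ext1 i
  simp [Set.piecewise]

theorem prod_map_ite_zero {ι A : Type*} [CommMonoidWithZero A] (u : ι → A) (p : ι → Prop)
    [DecidablePred p] (s : Multiset ι) :
    (s.map fun i ↦ if p i then u i else 0).prod = if ∀ i ∈ s, p i then (s.map u).prod else 0 := by
  induction s using Multiset.induction_on with
  | empty => simp
  | cons i s ih => by_cases hi : p i <;> simp [hi, ih]

section MultisetSeries

variable {R : Type*} [CommRing R]

theorem X_pow_sum_map {ι : Type*} (w : ι → ℕ) (s : Multiset ι) :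
    (X : R⟦X⟧) ^ (s.map w).sum = (s.map fun i ↦ X ^ w i).prod := by
  induction s using Multiset.induction_on with
  | empty => simp
  | cons i s ih => rw [Multiset.map_cons, Multiset.sum_cons, pow_add, ih, Multiset.map_cons,
      Multiset.prod_cons]

theorem X_pow_dvd_piecewise (s : Set ℕ) [DecidablePred (· ∈ s)] {v u : ℕ → R⟦X⟧}
    (hv : ∀ i, X ^ (i + 1) ∣ v i) (hu : ∀ i, X ^ (i + 1) ∣ u i) (i : ℕ) :
    X ^ (i + 1) ∣ s.piecewise v u i := by
  unfold Set.piecewise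
  split_ifs
  exacts [hv i, hu i]

variable [TopologicalSpace R]

/-- The generating function of all partitions in which a part `i + 1` has weight `u i`, a
partition being recorded as the multiset of its parts minus one. -/
noncomputable def multisetSeries (u : ℕ → R⟦X⟧) : R⟦X⟧ :=
  ∑' s : Multiset ℕ, (s.map u).prod

theorem summable_mul_prod_map (c : Multiset ℕ → R⟦X⟧) {u : ℕ → R⟦X⟧}
    (hu : ∀ i, X ^ (i + 1) ∣ u i) : Summable fun s : Multiset ℕ ↦ c s * (s.map u).prod := by
  refine summable_of_X_pow_dvd tendsto_sum_map_succ_cofinite_atTop fun s ↦ .mul_left ?_ _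
  rw [X_pow_sum_map]
  exact Multiset.prod_dvd_prod_of_dvd _ _ fun i _ ↦ hu i

variable {u : ℕ → R⟦X⟧}

theorem hasSum_multisetSeries (hu : ∀ i, X ^ (i + 1) ∣ u i) :
    HasSum (fun s : Multiset ℕ ↦ (s.map u).prod) (multisetSeries u) :=
  (by simpa using summable_mul_prod_map 1 hu : Summable _).hasSum

theorem hasSum_multisetSeries_ite (hu : ∀ i, X ^ (i + 1) ∣ u i) (p : ℕ → Prop) [DecidablePred p] :
    HasSum (fun s : Multiset ℕ ↦ if ∀ i ∈ s, p i then (s.map u).prod else 0)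
      (multisetSeries fun i ↦ if p i then u i else 0) := by
  simp_rw [← prod_map_ite_zero]
  refine hasSum_multisetSeries fun i ↦ ?_
  split_ifs
  exacts [hu i, dvd_zero _]

theorem hasSum_multisetSeries_sup_le (hu : ∀ i, X ^ (i + 1) ∣ u i) (k : ℕ) :
    HasSum (fun s : Multiset ℕ ↦ if (s.map (· + 1)).sup ≤ k then (s.map u).prod else 0)
      (multisetSeries ((Set.Iio k).piecewise u 0)) :=
  (hasSum_multisetSeries_ite hu (· < k)).congr_fun fun s ↦ by
    simp [Multiset.sup_le]

variable [DiscreteTopology R]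

theorem hasSum_multisetSeries_notMem (hu : ∀ i, X ^ (i + 1) ∣ u i) (i : ℕ) :
    HasSum (fun s : Multiset ℕ ↦ if i ∈ s then 0 else (s.map u).prod)
      ((1 - u i) * multisetSeries u) := by
  have hmem : HasSum (fun s : Multiset ℕ ↦ if i ∈ s then (s.map u).prod else 0)
      (u i * multisetSeries u) := by
    have hinj : Function.Injective (i ::ₘ ·) := fun _ _ ↦ (Multiset.cons_inj_right i).1
    rw [← hinj.hasSum_iff fun s hs ↦ if_neg fun hi ↦ hs ⟨s.erase i, Multiset.cons_erase hi⟩]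
    exact ((hasSum_multisetSeries hu).mul_left (u i)).congr_fun fun s ↦ by simp
  rw [one_sub_mul]
  exact ((hasSum_multisetSeries hu).sub hmem).congr_fun fun s ↦ by split_ifs <;> simp

theorem hasSum_multisetSeries_count_eq (hu : ∀ i, X ^ (i + 1) ∣ u i) (i k : ℕ) :
    HasSum (fun s : Multiset ℕ ↦ if s.count i = k then (s.map u).prod else 0)
      (u i ^ k * ((1 - u i) * multisetSeries u)) := by
  rw [← (add_right_injective (Multiset.replicate k i)).hasSum_iff fun s hs ↦ if_neg fun hk ↦ hs ?_]
  · refine ((hasSum_multisetSeries_notMem hu i).mul_left (u i ^ k)).congr_fun fun s ↦ ?_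
    simp
  · exact ⟨s - Multiset.replicate k i,
      add_tsub_cancel_of_le (Multiset.le_count_iff_replicate_le.1 hk.ge)⟩

theorem one_sub_mul_multisetSeries (hu : ∀ i, X ^ (i + 1) ∣ u i) (i : ℕ) :
    (1 - u i) * multisetSeries u = multisetSeries (Function.update u i 0) := by
  have h := hasSum_multisetSeries_ite hu (· ≠ i)
  have hupdate : (fun j ↦ if j ≠ i then u j else 0) = Function.update u i 0 := by
    ext1 j
    simp [Function.update_apply]
  rw [hupdate] at h
  refine (hasSum_multisetSeries_notMem hu i).unique (h.congr_fun fun s ↦ ?_)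
  split_ifs with hi hne hne
  exacts [(hne i hi rfl).elim, rfl, rfl, (hne fun j hj hji ↦ hi (hji ▸ hj)).elim]

theorem one_sub_mul_multisetSeries_piecewise (hu : ∀ i, X ^ (i + 1) ∣ u i)
    {v : ℕ → R⟦X⟧} (hv : ∀ i, X ^ (i + 1) ∣ v i) (k : ℕ) :
    (1 - v k) * multisetSeries ((Set.Iio (k + 1)).piecewise v u) =
      (1 - u k) * multisetSeries ((Set.Iio k).piecewise v u) := by
  have hleft := one_sub_mul_multisetSeries (X_pow_dvd_piecewise (Set.Iio (k + 1)) hv hu) k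
  have hright := one_sub_mul_multisetSeries (X_pow_dvd_piecewise (Set.Iio k) hv hu) k
  rw [Set.piecewise_eq_of_mem _ _ _ (Set.mem_Iio.2 k.lt_succ_self)] at hleft
  rw [Set.piecewise_eq_of_notMem _ _ _ Set.self_notMem_Iio] at hright
  rw [hleft, hright]
  congr 1
  ext1 i
  rcases lt_trichotomy i k with hi | rfl | hi
  · simp [Set.piecewise, hi.ne, hi, hi.trans k.lt_succ_self]
  · simp
  · simp [Set.piecewise, hi.ne', hi.not_gt, (Nat.succ_le_of_lt hi).not_gt]

theorem tprod_one_sub_mul_multisetSeries (hu : ∀ i, X ^ (i + 1) ∣ u i) :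
    (∏' i, (1 - u i)) * multisetSeries u = 1 := by
  let F (k : ℕ) : R⟦X⟧ := multisetSeries ((Set.Iio k).piecewise 0 u)
  have hzero (i : ℕ) : X ^ (i + 1) ∣ (0 : ℕ → R⟦X⟧) i := dvd_zero _
  have hlim : Tendsto F atTop (𝓝 1) := by
    refine tendsto_of_X_pow_dvd_sub fun n ↦ ?_
    have hsum := hasSum_multisetSeries (X_pow_dvd_piecewise (Set.Iio n) hzero hu)
    refine X_pow_dvd_tsum_sub hsum.summable 0 fun s hs ↦ ?_
    obtain ⟨i, hi⟩ := Multiset.exists_mem_of_ne_zero hs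
    refine .trans ?_ (Multiset.dvd_prod (Multiset.mem_map_of_mem _ hi))
    by_cases hin : i < n
    · simp [hin]
    · simpa [hin] using (pow_dvd_pow X (by lia)).trans (hu i)
  have hmul : Multipliable fun i ↦ 1 - u i :=
    multipliable_one_sub_of_X_pow_dvd fun i ↦ (pow_dvd_pow X i.le_succ).trans (hu i)
  have := tprod_mul_eq_tprod_mul_of_recurrence hmul multipliable_one hlim fun k ↦ by
    simpa using (one_sub_mul_multisetSeries_piecewise hu hzero k).symm
  simpa [F, piecewise_Iio_zero] using this

theorem multisetSeries_zero : multisetSeries (0 : ℕ → R⟦X⟧) = 1 := by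
  simpa using tprod_one_sub_mul_multisetSeries (u := (0 : ℕ → R⟦X⟧)) fun _ ↦ dvd_zero _

theorem hasSum_multisetSeries_sup_eq (hu : ∀ i, X ^ (i + 1) ∣ u i) (k : ℕ) :
    HasSum (fun s : Multiset ℕ ↦ if (s.map (· + 1)).sup = k + 1 then (s.map u).prod else 0)
      (u k * multisetSeries ((Set.Iio (k + 1)).piecewise u 0)) := by
  have hrec : (1 - u k) * multisetSeries ((Set.Iio (k + 1)).piecewise u 0) =
      multisetSeries ((Set.Iio k).piecewise u 0) := by
    simpa using one_sub_mul_multisetSeries_piecewise (u := 0) (fun _ ↦ dvd_zero _) hu k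
  have hsub : u k * multisetSeries ((Set.Iio (k + 1)).piecewise u 0) =
      multisetSeries ((Set.Iio (k + 1)).piecewise u 0) -
        multisetSeries ((Set.Iio k).piecewise u 0) := by
    linear_combination -hrec
  rw [hsub]
  refine ((hasSum_multisetSeries_sup_le hu (k + 1)).sub
    (hasSum_multisetSeries_sup_le hu k)).congr_fun fun s ↦ ?_
  split_ifs <;> first | lia | simp

theorem tsum_pow_sup_mul_prod_map (hu : ∀ i, X ^ (i + 1) ∣ u i) (z : R⟦X⟧) :
    ∑' s : Multiset ℕ, z ^ (s.map (· + 1)).sup * (s.map u).prod =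
      1 + ∑' k, z ^ (k + 1) * (u k * multisetSeries ((Set.Iio (k + 1)).piecewise u 0)) := by
  let g : ℕ → R⟦X⟧
    | 0 => 1
    | k + 1 => z ^ (k + 1) * (u k * multisetSeries ((Set.Iio (k + 1)).piecewise u 0))
  have hg : HasSum g (∑' s : Multiset ℕ, z ^ (s.map (· + 1)).sup * (s.map u).prod) := by
    refine hasSum_of_hasSum_fiber (fun s ↦ (s.map (· + 1)).sup) (summable_mul_prod_map _ hu) ?_
    rintro (_ | k)
    · have hzero := hasSum_multisetSeries_sup_le hu 0
      rw [piecewise_Iio_zero, multisetSeries_zero] at hzero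
      refine hzero.congr_fun fun s ↦ ?_
      simp only [nonpos_iff_eq_zero]
      split_ifs with hs
      · rw [hs, pow_zero, one_mul]
      · rfl
    · refine ((hasSum_multisetSeries_sup_eq hu k).mul_left (z ^ (k + 1))).congr_fun fun s ↦ ?_
      split_ifs with hs
      · rw [hs]
      · rw [mul_zero]
  rw [← hg.tsum_eq, hg.summable.tsum_eq_zero_add]

end MultisetSeries

/-! ### The crank -/

/-- The Andrews–Garvan crank as a function of the multiset of parts. -/
noncomputable def partsCrank (s : Multiset ℕ) : ℤ :=
  if s.count 1 = 0 then (s.sup : ℤ) else ((s.filter fun p ↦ s.count 1 < p).card : ℤ) - s.count 1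

section CrankSeries

variable {R : Type*} [CommRing R]

/-- The monomial `z ^ crank(λ) q ^ |λ|` of the partition `λ` whose parts minus one form `s`. -/
noncomputable def crankTerm (z : R⟦X⟧ˣ) (s : Multiset ℕ) : R⟦X⟧ :=
  ((z ^ partsCrank (s.map (· + 1)) : R⟦X⟧ˣ) : R⟦X⟧) * X ^ (s.map (· + 1)).sum

theorem count_map_succ (s : Multiset ℕ) : (s.map (· + 1)).count 1 = s.count 0 :=
  Multiset.count_map_eq_count' (· + 1) s (add_left_injective 1) 0

theorem crankTerm_of_count_eq_zero (z : R⟦X⟧ˣ) {s : Multiset ℕ} (hs : s.count 0 = 0) :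
    crankTerm z s = (z : R⟦X⟧) ^ (s.map (· + 1)).sup * (s.map fun i ↦ X ^ (i + 1)).prod := by
  rw [crankTerm, partsCrank, if_pos (by rwa [count_map_succ]), zpow_natCast,
    Units.val_pow_eq_pow_val, X_pow_sum_map]

theorem prod_map_piecewise_Iio (z : R⟦X⟧) (k : ℕ) (s : Multiset ℕ) :
    (s.map ((Set.Iio k).piecewise (fun i ↦ X ^ (i + 1)) fun i ↦ z * X ^ (i + 1))).prod =
      z ^ ((s.map (· + 1)).filter (k < ·)).card * X ^ (s.map (· + 1)).sum := by
  induction s using Multiset.induction_on with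
  | empty => simp
  | cons i s ih =>
    rw [Multiset.map_cons, Multiset.prod_cons, ih, Multiset.map_cons, Multiset.sum_cons, pow_add]
    by_cases hi : i < k
    · rw [Set.piecewise_eq_of_mem _ _ _ (by simpa using hi),
        Multiset.filter_cons_of_neg (p := (k < ·)) _ (by lia)]
      ring
    · rw [Set.piecewise_eq_of_notMem _ _ _ (by simpa using hi),
        Multiset.filter_cons_of_pos (p := (k < ·)) _ (by lia), Multiset.card_cons]
      ring

theorem crankTerm_of_count_ne_zero (z : R⟦X⟧ˣ) {s : Multiset ℕ} (hs : s.count 0 ≠ 0) :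
    crankTerm z s = (↑z⁻¹ : R⟦X⟧) ^ s.count 0 * (s.map ((Set.Iio (s.count 0)).piecewise
      (fun i ↦ X ^ (i + 1)) fun i ↦ (z : R⟦X⟧) * X ^ (i + 1))).prod := by
  rw [crankTerm, partsCrank, count_map_succ, if_neg hs, sub_eq_neg_add, zpow_add, zpow_neg,
    ← inv_zpow, zpow_natCast, zpow_natCast, prod_map_piecewise_Iio, Units.val_mul,
    Units.val_pow_eq_pow_val, Units.val_pow_eq_pow_val, mul_assoc]

theorem X_pow_dvd_update_X_pow (i : ℕ) :
    X ^ (i + 1) ∣ Function.update (fun i ↦ (X : R⟦X⟧) ^ (i + 1)) 0 0 i := by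
  obtain rfl | hi := eq_or_ne i 0 <;> simp [*]

variable [TopologicalSpace R]

/-- The generating function of partitions, with `z` marking the parts larger than `k`. -/
noncomputable def largePartSeries (z : R⟦X⟧) (k : ℕ) : R⟦X⟧ :=
  multisetSeries ((Set.Iio k).piecewise (fun i ↦ X ^ (i + 1)) fun i ↦ z * X ^ (i + 1))

theorem summable_crankTerm (z : R⟦X⟧ˣ) : Summable (crankTerm z) :=
  summable_of_X_pow_dvd tendsto_sum_map_succ_cofinite_atTop fun s ↦
    dvd_mul_left (X ^ (s.map (· + 1)).sum) _

/-- The generating function of the crank, with `(z - 1) X` added to give the linear term its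
conventional value `(z - 1 + z⁻¹) X`. -/
noncomputable def crankSeries (z : R⟦X⟧ˣ) : R⟦X⟧ :=
  ∑' s, crankTerm z s + ((z : R⟦X⟧) - 1) * X

variable [DiscreteTopology R]

theorem largePartSeries_succ (z : R⟦X⟧) (k : ℕ) :
    (1 - X ^ (k + 1)) * largePartSeries z (k + 1) = (1 - z * X * X ^ k) * largePartSeries z k := by
  rw [mul_assoc, ← pow_succ']
  exact one_sub_mul_multisetSeries_piecewise (fun i ↦ dvd_mul_left _ z) (fun i ↦ dvd_rfl) k

theorem largePartSeries_zero_mul_qPochhammer (z : R⟦X⟧) :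
    largePartSeries z 0 * qPochhammer (z * X) X = 1 := by
  rw [largePartSeries, piecewise_Iio_zero, qPochhammer, mul_comm]
  simpa only [mul_assoc, ← pow_succ'] using
    tprod_one_sub_mul_multisetSeries fun i ↦ dvd_mul_left (X ^ (i + 1)) z

theorem tsum_pow_mul_largePartSeries_zero (z : R⟦X⟧) :
    ∑' k, (z * X) ^ k * largePartSeries 0 k = largePartSeries z 0 := by
  have hbinom := tsum_pow_mul_mul_qPochhammer (dvd_mul_left X z) (largePartSeries_succ 0)
  have hzero := largePartSeries_zero_mul_qPochhammer (0 : R⟦X⟧)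
  have hz := largePartSeries_zero_mul_qPochhammer z
  rw [zero_mul] at hzero hbinom
  rw [zero_mul, hzero] at hbinom
  linear_combination largePartSeries z 0 * hbinom -
    (∑' k, (z * X) ^ k * largePartSeries 0 k) * hz

theorem one_sub_X_mul_largePartSeries_zero (k : ℕ) :
    (1 - X) * largePartSeries (0 : R⟦X⟧) (k + 1) = multisetSeries
      ((Set.Iio (k + 1)).piecewise (Function.update (fun i ↦ X ^ (i + 1)) 0 0) 0) := by
  have hu := X_pow_dvd_piecewise (Set.Iio (k + 1)) (fun i ↦ dvd_rfl) fun i ↦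
    dvd_mul_left (X ^ (i + 1)) (0 : R⟦X⟧)
  have h := one_sub_mul_multisetSeries hu 0
  rw [Set.piecewise_eq_of_mem _ _ _ (Set.mem_Iio.2 k.succ_pos), zero_add, pow_one,
    ← largePartSeries] at h
  rw [h]
  congr 1
  ext1 i
  obtain rfl | hi := eq_or_ne i 0
  · simp
  · by_cases hik : i < k + 1 <;> simp [Set.piecewise, hi, hik]

theorem tsum_pow_sup_mul_prod_map_update (z : R⟦X⟧) :
    ∑' s : Multiset ℕ, z ^ (s.map (· + 1)).sup *
        (s.map (Function.update (fun i ↦ X ^ (i + 1)) 0 0)).prod =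
      (1 - X) * largePartSeries z 0 - (z - 1) * X := by
  have hs := summable_pow_mul (dvd_mul_left X z) (largePartSeries 0)
  have hzero : largePartSeries (0 : R⟦X⟧) 0 = 1 := by
    simp only [largePartSeries, piecewise_Iio_zero, zero_mul]
    exact multisetSeries_zero
  have hone : (1 - X) * largePartSeries (0 : R⟦X⟧) 1 = 1 := by
    simpa [hzero] using largePartSeries_succ (0 : R⟦X⟧) 0
  have hterm (k : ℕ) : z ^ (k + 1) * (Function.update (fun i ↦ X ^ (i + 1)) 0 0 k *
      ((1 - X) * largePartSeries 0 (k + 1))) =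
      (1 - X) * ((z * X) ^ (k + 1) * largePartSeries 0 (k + 1)) - if k = 0 then z * X else 0 := by
    obtain rfl | hk := eq_or_ne k 0
    · simp only [Function.update_self, zero_mul, mul_zero, zero_add, if_true, pow_one]
      linear_combination -(z * X) * hone
    · rw [Function.update_of_ne hk, if_neg hk]
      ring
  have hs1 := (summable_nat_add_iff 1).2 hs
  rw [← tsum_pow_mul_largePartSeries_zero, tsum_pow_sup_mul_prod_map X_pow_dvd_update_X_pow]
  simp only [← one_sub_X_mul_largePartSeries_zero, hterm]
  rw [(hs1.mul_left (1 - X)).tsum_sub (hasSum_ite_eq 0 (z * X)).summable, tsum_ite_eq,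
    hs1.tsum_mul_left, hs.tsum_eq_zero_add, hzero]
  ring

theorem hasSum_crankTerm_count_eq_zero (z : R⟦X⟧ˣ) :
    HasSum (fun s : Multiset ℕ ↦ if s.count 0 = 0 then crankTerm z s else 0)
      ((1 - X) * largePartSeries (z : R⟦X⟧) 0 - ((z : R⟦X⟧) - 1) * X) := by
  rw [← tsum_pow_sup_mul_prod_map_update]
  refine (summable_mul_prod_map _ X_pow_dvd_update_X_pow).hasSum.congr_fun fun s ↦ ?_
  split_ifs with hs
  · rw [crankTerm_of_count_eq_zero z hs]
    congr 2
    refine Multiset.map_congr rfl fun i hi ↦ ?_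
    have hi0 : i ≠ 0 := fun h ↦ Multiset.count_eq_zero.1 hs (h ▸ hi)
    rw [Function.update_of_ne hi0]
  · rw [Multiset.prod_eq_zero, mul_zero]
    exact Multiset.mem_map.2 ⟨0, Multiset.count_ne_zero.1 hs, Function.update_self ..⟩

theorem hasSum_crankTerm_count_eq (z : R⟦X⟧ˣ) {k : ℕ} (hk : k ≠ 0) :
    HasSum (fun s : Multiset ℕ ↦ if s.count 0 = k then crankTerm z s else 0)
      ((1 - X) * (((↑z⁻¹ : R⟦X⟧) * X) ^ k * largePartSeries (z : R⟦X⟧) k)) := by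
  have hu := X_pow_dvd_piecewise (Set.Iio k) (fun i ↦ dvd_rfl) fun i ↦
    dvd_mul_left (X ^ (i + 1)) (z : R⟦X⟧)
  have hcount := (hasSum_multisetSeries_count_eq hu 0 k).mul_left ((↑z⁻¹ : R⟦X⟧) ^ k)
  rw [Set.piecewise_eq_of_mem _ _ _ (Set.mem_Iio.2 (Nat.pos_of_ne_zero hk)), zero_add, pow_one,
    ← largePartSeries] at hcount
  rw [mul_pow, mul_left_comm, mul_assoc]
  refine hcount.congr_fun fun s ↦ ?_
  split_ifs with hs
  · rw [crankTerm_of_count_ne_zero z (hs ▸ hk), hs]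
  · rw [mul_zero]

theorem crankSeries_eq_mul (z : R⟦X⟧ˣ) :
    crankSeries z =
      (1 - X) * ∑' k, ((↑z⁻¹ : R⟦X⟧) * X) ^ k * largePartSeries (z : R⟦X⟧) k := by
  let t (k : ℕ) : R⟦X⟧ := ((↑z⁻¹ : R⟦X⟧) * X) ^ k * largePartSeries (z : R⟦X⟧) k
  have ht : Summable t := summable_pow_mul (dvd_mul_left X (↑z⁻¹ : R⟦X⟧)) _
  have hsum : HasSum (fun k ↦ (1 - X) * t k - if k = 0 then ((z : R⟦X⟧) - 1) * X else 0)
      (∑' s, crankTerm z s) := by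
    refine hasSum_of_hasSum_fiber (·.count 0) (summable_crankTerm z) fun k ↦ ?_
    obtain rfl | hk := eq_or_ne k 0
    · simpa only [t, if_true, pow_zero, one_mul] using hasSum_crankTerm_count_eq_zero z
    · simpa only [t, if_neg hk, sub_zero] using hasSum_crankTerm_count_eq z hk
  rw [crankSeries, hsum.unique ((ht.hasSum.mul_left _).sub (hasSum_ite_eq 0 _)), sub_add_cancel]

theorem crankSeries_mul_qPochhammer (z : R⟦X⟧ˣ) :
    crankSeries z * (qPochhammer ((z : R⟦X⟧) * X) X * qPochhammer ((↑z⁻¹ : R⟦X⟧) * X) X) =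
      qPochhammer X X := by
  have hbinom := tsum_pow_mul_mul_qPochhammer (dvd_mul_left X (↑z⁻¹ : R⟦X⟧))
    (largePartSeries_succ (z : R⟦X⟧))
  rw [mul_mul_mul_comm, Units.mul_inv, one_mul] at hbinom
  rw [crankSeries_eq_mul, qPochhammer_eq_one_sub_mul X dvd_rfl]
  linear_combination (1 - X) * qPochhammer ((z : R⟦X⟧) * X) X * hbinom +
    (1 - X) * qPochhammer (X * X : R⟦X⟧) X * largePartSeries_zero_mul_qPochhammer (z : R⟦X⟧)

end CrankSeries

/-! ### Coefficients of generating functions -/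

section Coefficients

variable {ι : Type*} {w : ι → ℕ}

theorem finite_setOf_eq_of_tendsto (hw : Tendsto w cofinite atTop) (n : ℕ) :
    {i | w i = n}.Finite :=
  (eventually_cofinite.1 (hw.eventually_ne_atTop n)).subset fun _ hi h ↦ h hi

theorem coeff_tsum_monomial {R : Type*} [CommRing R] [TopologicalSpace R] [DiscreteTopology R]
    (hw : Tendsto w cofinite atTop) (a : ι → R) (n : ℕ) :
    coeff n (∑' i, monomial (w i) (a i)) =
      ∑ i ∈ (finite_setOf_eq_of_tendsto hw n).toFinset, a i := by
  have hs : Summable fun i ↦ monomial (w i) (a i) := by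
    refine summable_of_X_pow_dvd hw fun i ↦ X_pow_dvd_iff.2 fun d hd ↦ ?_
    rw [coeff_monomial, if_neg hd.ne]
  have hfin : HasSum (fun i ↦ coeff n (monomial (w i) (a i)))
      (∑ i ∈ (finite_setOf_eq_of_tendsto hw n).toFinset, coeff n (monomial (w i) (a i))) :=
    hasSum_sum_of_ne_finset_zero fun i hi ↦ by
      rw [Set.Finite.mem_toFinset, Set.mem_ofPred_eq] at hi
      rw [coeff_monomial, if_neg (Ne.symm hi)]
  refine (((hasSum_iff_hasSum_coeff R).1 hs.hasSum n).unique hfin).trans ?_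
  refine Finset.sum_congr rfl fun i hi ↦ ?_
  rw [Set.Finite.mem_toFinset, Set.mem_ofPred_eq] at hi
  rw [coeff_monomial, if_pos hi.symm]

theorem coeff_tsum_X_pow (R : Type*) [CommRing R] [TopologicalSpace R] [DiscreteTopology R]
    (hw : Tendsto w cofinite atTop) (n : ℕ) :
    coeff n (∑' i, (X : R⟦X⟧) ^ w i) = Nat.card {i // w i = n} := by
  simp only [X_pow_eq, coeff_tsum_monomial hw, sum_const, nsmul_one]
  rw [Nat.subtype_card (finite_setOf_eq_of_tendsto hw n).toFinset fun i ↦ by simp]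

theorem coeff_coeff_tsum_monomial_T [TopologicalSpace ℤ[T;T⁻¹]] [DiscreteTopology ℤ[T;T⁻¹]]
    (hw : Tendsto w cofinite atTop) (d : ι → ℤ) (n : ℕ) (m : ℤ) :
    (coeff n (∑' i, monomial (w i) (T (d i) : ℤ[T;T⁻¹]))).coeff m =
      Nat.card {i // w i = n ∧ d i = m} := by
  rw [coeff_tsum_monomial hw, Nat.subtype_card
    ((finite_setOf_eq_of_tendsto hw n).toFinset.filter (d · = m)) fun i ↦ by simp]
  simp [AddMonoidAlgebra.coeff_sum]

end Coefficients

/-! ### Cubic partitions -/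

section Cubic

theorem cubicPartition_eq_card (n : ℕ) :
    cubicPartition n = Nat.card {p : Multiset ℕ × Multiset ℕ //
      (p.1.map (· + 1)).sum + (p.2.map fun i ↦ 2 * (i + 1)).sum = n} := by
  let f : Multiset ℕ × Multiset ℕ → Multiset ℕ × Multiset ℕ :=
    Prod.map (.map (· + 1)) (.map fun i ↦ 2 * (i + 1))
  have hf : f.Injective :=
    (Multiset.map_injective (add_left_injective 1)).prodMap
      (Multiset.map_injective fun i j h ↦ by lia)
  have hrange : {p : Multiset ℕ × Multiset ℕ | (∀ i ∈ p.1, 0 < i) ∧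
      (∀ i ∈ p.2, 0 < i ∧ Even i) ∧ p.1.sum + p.2.sum = n} ⊆ Set.range f := by
    rintro ⟨s, t⟩ ⟨hs, ht, -⟩
    refine ⟨(s.map (· - 1), t.map (· / 2 - 1)), Prod.ext ?_ ?_⟩
    · simp only [f, Prod.map, Multiset.map_map]
      exact (Multiset.map_congr rfl fun i hi ↦ Nat.sub_add_cancel (hs i hi)).trans s.map_id'
    · simp only [f, Prod.map, Multiset.map_map]
      refine (Multiset.map_congr rfl fun i hi ↦ ?_).trans t.map_id'
      obtain ⟨hpos, k, rfl⟩ := ht i hi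
      simp only [Function.comp_apply]
      lia
  refine (Nat.card_preimage_of_injective hf hrange).symm.trans ?_
  refine Nat.card_congr (Equiv.subtypeEquivRight fun p ↦ ?_)
  simp [f]

theorem tendsto_sum_map_add_sum_map_cofinite_atTop :
    Tendsto (fun p : Multiset ℕ × Multiset ℕ ↦
      (p.1.map (· + 1)).sum + (p.2.map fun i ↦ 2 * (i + 1)).sum) cofinite atTop := by
  refine tendsto_add_cofinite_atTop (w := fun t : Multiset ℕ ↦ (t.map fun i ↦ 2 * (i + 1)).sum)
    tendsto_sum_map_succ_cofinite_atTop ?_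
  simp only [Multiset.sum_map_mul_left]
  exact tendsto_sum_map_succ_cofinite_atTop.const_mul_atTop' two_pos

variable (R : Type*) [CommRing R]

theorem X_pow_succ_dvd_X_pow_two_mul (i : ℕ) : (X : R⟦X⟧) ^ (i + 1) ∣ X ^ (2 * (i + 1)) :=
  pow_dvd_pow X (by lia)

variable [TopologicalSpace R]

/-- The generating function of pairs of a partition and a partition into even parts, that is, of
cubic partitions. -/
noncomputable def cubicSeries : R⟦X⟧ :=
  multisetSeries (fun i ↦ X ^ (i + 1)) * multisetSeries fun i ↦ X ^ (2 * (i + 1))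

variable [DiscreteTopology R]

theorem coeff_cubicSeries (n : ℕ) : coeff n (cubicSeries R) = cubicPartition n := by
  have hpart := hasSum_multisetSeries fun i ↦ dvd_refl ((X : R⟦X⟧) ^ (i + 1))
  have heven := hasSum_multisetSeries (X_pow_succ_dvd_X_pow_two_mul R)
  have hs := summable_of_X_pow_dvd tendsto_sum_map_add_sum_map_cofinite_atTop
    fun _ ↦ dvd_refl ((X : R⟦X⟧) ^ _)
  simp only [pow_add _ (Multiset.sum _), X_pow_sum_map] at hs
  rw [cubicSeries, ← (hpart.mul heven hs).tsum_eq, cubicPartition_eq_card,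
    ← coeff_tsum_X_pow R tendsto_sum_map_add_sum_map_cofinite_atTop]
  simp only [pow_add _ (Multiset.sum _), X_pow_sum_map]

theorem cubicSeries_mul_qPochhammer :
    cubicSeries R * (qPochhammer X X * qPochhammer (X ^ 2) (X ^ 2)) = 1 := by
  have hpart := tprod_one_sub_mul_multisetSeries fun i ↦ dvd_refl ((X : R⟦X⟧) ^ (i + 1))
  have heven := tprod_one_sub_mul_multisetSeries (X_pow_succ_dvd_X_pow_two_mul R)
  simp only [mul_add_one, pow_add _ (2 * _)] at heven
  simp only [cubicSeries, qPochhammer, ← pow_succ', mul_add_one, pow_add _ (2 * _), ← pow_mul,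
    mul_comm (X ^ 2)]
  rw [mul_mul_mul_comm, mul_comm (multisetSeries _), hpart, mul_comm (multisetSeries _), heven,
    one_mul]

end Cubic

/-! ### Pairs of partitions with steadily decreasing parts -/

section FinsuppCons

variable {M : Type*} [AddCommMonoid M]

/-- The sequence `a, f 0, f 1, …`: the analogue of `Finsupp.cons` for sequences indexed by `ℕ`. -/
noncomputable def natCons (a : M) (f : ℕ →₀ M) : ℕ →₀ M :=
  .single 0 a + f.mapDomain (· + 1)

@[simp]
theorem natCons_zero (a : M) (f : ℕ →₀ M) : natCons a f 0 = a := by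
  rw [natCons, Finsupp.add_apply, Finsupp.single_eq_same,
    Finsupp.mapDomain_of_notMem_range, add_zero]
  simp

@[simp]
theorem natCons_succ (a : M) (f : ℕ →₀ M) (i : ℕ) : natCons a f (i + 1) = f i := by
  rw [natCons, Finsupp.add_apply, Finsupp.single_eq_of_ne i.succ_ne_zero, zero_add]
  exact Finsupp.mapDomain_apply (add_left_injective 1) f i

theorem degree_natCons (a : M) (f : ℕ →₀ M) : (natCons a f).degree = a + f.degree := by
  rw [natCons, map_add, Finsupp.degree_single, Finsupp.degree_mapDomain]

theorem support_subset_range_degree_of_antitone {f : ℕ →₀ ℕ} (hf : Antitone f) :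
    f.support ⊆ range f.degree := by
  intro i hi
  have hsub : range (i + 1) ⊆ f.support := fun j hj ↦ by
    have := hf (Nat.le_of_lt_succ (mem_range.1 hj))
    rw [Finsupp.mem_support_iff] at hi ⊢
    lia
  refine mem_range.2 <| Nat.succ_le_iff.1 ?_
  calc i + 1 = ∑ j ∈ range (i + 1), 1 := by simp
    _ ≤ ∑ j ∈ f.support, 1 := sum_le_sum_of_subset hsub
    _ ≤ f.degree := sum_le_sum fun j hj ↦ Nat.one_le_iff_ne_zero.2 (Finsupp.mem_support_iff.1 hj)

end FinsuppCons

theorem SteadilyDecreasing.antitone_left {a b : ℕ → ℕ} (h : SteadilyDecreasing a b) : Antitone a :=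
  antitone_nat_of_succ_le fun i ↦ (le_max_left _ _).trans ((h i).trans (min_le_left _ _))

theorem SteadilyDecreasing.symm {a b : ℕ → ℕ} (h : SteadilyDecreasing a b) :
    SteadilyDecreasing b a := fun i ↦ by
  rw [max_comm, min_comm]
  exact h i

/-- Pairs of partitions with steadily decreasing parts, of arbitrary size. -/
abbrev SteadyPair : Type :=
  {p : (ℕ →₀ ℕ) × (ℕ →₀ ℕ) // SteadilyDecreasing p.1 p.2}

namespace SteadyPair

/-- The largest part occurring in either partition. -/
def head (p : SteadyPair) : ℕ :=
  max (p.1.1 0) (p.1.2 0)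

/-- Both partitions with their first part removed. -/
noncomputable def tail (p : SteadyPair) : SteadyPair :=
  ⟨(p.1.1.comapDomain (· + 1) (add_left_injective 1).injOn,
    p.1.2.comapDomain (· + 1) (add_left_injective 1).injOn), fun i ↦ p.2 (i + 1)⟩

/-- Prepends first parts exceeding the largest part of `p` by `a` and `b`. -/
noncomputable def cons (a b : ℕ) (p : SteadyPair) : SteadyPair :=
  ⟨(natCons (a + p.head) p.1.1, natCons (b + p.head) p.1.2), by
    rintro (_ | i)
    · simp [head]
    · simpa using p.2 i⟩

/-- A steadily decreasing pair is a steadily decreasing tail together with two arbitrary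
excesses of the first parts over the tail. -/
noncomputable def consEquiv : (ℕ × ℕ) × SteadyPair ≃ SteadyPair where
  toFun x := cons x.1.1 x.1.2 x.2
  invFun p := ((p.1.1 0 - p.tail.head, p.1.2 0 - p.tail.head), p.tail)
  left_inv := by
    rintro ⟨⟨a, b⟩, p⟩
    have htail : (cons a b p).tail = p := by
      refine Subtype.ext (Prod.ext ?_ ?_) <;> ext i <;> simp [tail, cons]
    simp only [htail]
    simp [cons]
  right_inv p := by
    have hhead : p.tail.head ≤ min (p.1.1 0) (p.1.2 0) := p.2 0
    rw [le_min_iff] at hhead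
    refine Subtype.ext (Prod.ext ?_ ?_) <;> ext (_ | i)
    · simp [cons, hhead.1]
    · simp [cons, tail]
    · simp [cons, hhead.2]
    · simp [cons, tail]

theorem head_cons (a b : ℕ) (p : SteadyPair) : (cons a b p).head = max a b + p.head := by
  simp [head, cons, max_add_add_right]

theorem degree_cons_left (a b : ℕ) (p : SteadyPair) :
    (cons a b p).1.1.degree = a + p.head + p.1.1.degree :=
  degree_natCons _ _

theorem degree_cons_right (a b : ℕ) (p : SteadyPair) :
    (cons a b p).1.2.degree = b + p.head + p.1.2.degree :=
  degree_natCons _ _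

theorem apply_le_head (p : SteadyPair) (i : ℕ) : max (p.1.1 i) (p.1.2 i) ≤ p.head :=
  max_le_max (p.2.antitone_left i.zero_le) (p.2.symm.antitone_left i.zero_le)

instance : Zero SteadyPair :=
  ⟨⟨0, fun _ ↦ le_rfl⟩⟩

theorem coe_zero : ((0 : SteadyPair) : (ℕ →₀ ℕ) × (ℕ →₀ ℕ)) = 0 :=
  rfl

theorem head_zero : (0 : SteadyPair).head = 0 :=
  rfl

theorem head_ne_zero {p : SteadyPair} (hp : p ≠ 0) : p.head ≠ 0 := fun h ↦ hp <| by
  have hle := p.apply_le_head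
  simp only [h, max_le_iff, Nat.le_zero] at hle
  exact Subtype.ext (Prod.ext (Finsupp.ext fun i ↦ (hle i).1) (Finsupp.ext fun i ↦ (hle i).2))

theorem max_apply_eq_zero {p : SteadyPair} {i : ℕ} (hi : p.1.2.degree < i) :
    max (p.1.1 i) (p.1.2 i) = 0 := by
  obtain ⟨j, rfl⟩ := Nat.exists_eq_add_one_of_ne_zero (Nat.ne_zero_of_lt hi)
  have hj : p.1.2 j = 0 := by
    by_contra h
    have := support_subset_range_degree_of_antitone p.2.symm.antitone_left
      (Finsupp.mem_support_iff.2 h)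
    rw [mem_range] at this
    lia
  exact Nat.le_zero.1 ((p.2 j).trans ((min_le_right _ _).trans hj.le))

theorem finite_setOf_head_add_degree_lt (N : ℕ) :
    {p : SteadyPair | p.head + p.1.2.degree < N}.Finite := by
  let c : ℕ →₀ ℕ := Finsupp.indicator (range N) fun _ _ ↦ N
  refine Set.Finite.of_finite_image ((Set.finite_Iic (c, c)).subset ?_) Subtype.val_injective.injOn
  rintro _ ⟨p, hp, rfl⟩
  rw [Set.mem_ofPred_eq] at hp
  have hle (i : ℕ) : max (p.1.1 i) (p.1.2 i) ≤ c i := by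
    by_cases hi : i < N
    · have := p.apply_le_head i
      rw [Finsupp.indicator_of_mem (mem_range.2 hi)]
      lia
    · rw [max_apply_eq_zero (by lia)]
      exact zero_le
  exact ⟨fun i ↦ (le_max_left _ _).trans (hle i), fun i ↦ (le_max_right _ _).trans (hle i)⟩

theorem tendsto_head_add_degree_cofinite_atTop :
    Tendsto (fun p : SteadyPair ↦ p.head + p.1.2.degree) cofinite atTop :=
  tendsto_atTop.2 fun N ↦ eventually_cofinite.2 <| by
    simpa only [not_le] using finite_setOf_head_add_degree_lt N

end SteadyPair

theorem bipartitePi_eq_card (m n : ℕ) :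
    bipartitePi m n = Nat.card {p : SteadyPair // p.1.1.degree = m ∧ p.1.2.degree = n} := by
  refine Nat.card_congr ((Equiv.subtypeEquivRight fun p ↦ ?_).trans
    (Equiv.subtypeSubtypeEquivSubtypeInter _ fun p : (ℕ →₀ ℕ) × (ℕ →₀ ℕ) ↦
      p.1.degree = m ∧ p.2.degree = n).symm)
  exact ⟨fun h ↦ h.2.2, fun h ↦ ⟨fun i ↦ h.1.antitone_left i.le_succ,
    fun i ↦ h.1.symm.antitone_left i.le_succ, h⟩⟩

theorem card_subtype_add_eq {τ : Type*} (P : τ → Prop) (f : τ → ℕ) (m : ℕ) :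
    Nat.card {x : ℕ × τ // P x.2 ∧ x.1 + f x.2 = m} = Nat.card {t // P t ∧ f t ≤ m} :=
  Nat.card_congr
    { toFun x := ⟨x.1.2, x.2.1, by lia⟩
      invFun t := ⟨(m - f t.1, t.1), t.2.1, by lia⟩
      left_inv x := Subtype.ext (Prod.ext (by grind) rfl)
      right_inv t := rfl }

theorem card_subtype_le_succ {τ : Type*} {P : τ → Prop} (hP : {t | P t}.Finite) (f : τ → ℕ)
    (m : ℕ) :
    Nat.card {t // P t ∧ f t ≤ m + 1} =
      Nat.card {t // P t ∧ f t ≤ m} + Nat.card {t // P t ∧ f t = m + 1} := by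
  classical
  have hcard (q : τ → Prop) [DecidablePred q] :
      Nat.card {t // P t ∧ q t} = (hP.toFinset.filter q).card :=
    Nat.subtype_card _ fun t ↦ by simp
  rw [hcard (f · ≤ m + 1), hcard (f · ≤ m), hcard (f · = m + 1),
    ← card_union_of_disjoint, ← filter_or]
  · simp only [Nat.le_succ_iff, Nat.succ_eq_add_one]
  · exact disjoint_filter.2 fun t _ h ↦ by lia

theorem bipartitePi_eq_card_le (m n : ℕ) :
    bipartitePi m n = Nat.card {x : ℕ × SteadyPair //
      x.1 + (x.2.head + x.2.1.2.degree) = n ∧ x.2.head + x.2.1.1.degree ≤ m} := by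
  rw [bipartitePi_eq_card, ← card_subtype_add_eq,
    ← Nat.card_congr ((Equiv.prodAssoc ℕ ℕ SteadyPair).symm.trans
      SteadyPair.consEquiv).subtypeEquivOfSubtype]
  refine Nat.card_congr (Equiv.subtypeEquivRight fun x ↦ ?_)
  simp [SteadyPair.consEquiv, SteadyPair.degree_cons_left, SteadyPair.degree_cons_right,
    and_comm, add_assoc]

theorem tendsto_add_head_add_degree_cofinite_atTop :
    Tendsto (fun x : ℕ × SteadyPair ↦ x.1 + (x.2.head + x.2.1.2.degree)) cofinite atTop :=
  tendsto_add_cofinite_atTop tendsto_id_cofinite_atTop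
    SteadyPair.tendsto_head_add_degree_cofinite_atTop

/-- After removal of the first parts, `π(m, n)` counts the pairs for which the first part of `α` may
take up the slack in an inequality `≤ m`; hence `D(m, n)` counts those with equality. -/
theorem Dbip_eq_card (m n : ℕ) :
    Dbip m n = Nat.card {x : ℕ × SteadyPair //
      x.1 + (x.2.head + x.2.1.2.degree) = n ∧ x.2.head + x.2.1.1.degree = m} := by
  have hfin := finite_setOf_eq_of_tendsto tendsto_add_head_add_degree_cofinite_atTop n
  rw [Dbip]
  cases m with
  | zero => simp only [bipartitePi_eq_card_le, Nat.le_zero, if_true, sub_zero]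
  | succ m =>
    rw [if_neg m.succ_ne_zero, Nat.add_sub_cancel, bipartitePi_eq_card_le, bipartitePi_eq_card_le,
      card_subtype_le_succ hfin, Nat.cast_add, add_sub_cancel_left]

section SteadySeries

variable {R : Type*} [CommRing R] [TopologicalSpace R]

/-- The generating function of pairs of partitions `(α, β)` with steadily decreasing parts, where
`s`, `x` and `y` mark the largest part, the size of `α` and the size of `β`. -/
noncomputable def steadySeries (s x y : R⟦X⟧) : R⟦X⟧ :=
  ∑' p : SteadyPair, s ^ p.head * (x ^ p.1.1.degree * y ^ p.1.2.degree)

variable {s x y : R⟦X⟧}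

theorem summable_steadySeries (hs : X ∣ s) (hy : X ∣ y) :
    Summable fun p : SteadyPair ↦ s ^ p.head * (x ^ p.1.1.degree * y ^ p.1.2.degree) := by
  refine summable_of_X_pow_dvd SteadyPair.tendsto_head_add_degree_cofinite_atTop fun p ↦ ?_
  rw [pow_add]
  exact mul_dvd_mul (pow_dvd_pow_of_dvd hs _) ((pow_dvd_pow_of_dvd hy _).mul_left _)

theorem summable_pow_max_mul (hs : X ∣ s) (hy : X ∣ y) :
    Summable fun c : ℕ × ℕ ↦ s ^ max c.1 c.2 * (x ^ c.1 * y ^ c.2) := by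
  refine summable_of_X_pow_dvd (tendsto_add_cofinite_atTop tendsto_id_cofinite_atTop
    tendsto_id_cofinite_atTop) fun c ↦ ?_
  rw [id, id, pow_add]
  exact mul_dvd_mul ((pow_dvd_pow X (le_max_left _ _)).trans (pow_dvd_pow_of_dvd hs _))
    ((pow_dvd_pow_of_dvd hy _).mul_left _)

variable [DiscreteTopology R]

/-- The terms with `c.1 = 0` and with `c.2 = 0` are geometric, and lowering both indices by one in
the remaining terms divides them by `s * (x * y)`. -/
theorem tsum_pow_max_mul_eq_add (hs : X ∣ s) (hy : X ∣ y) :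
    ∑' c : ℕ × ℕ, s ^ max c.1 c.2 * (x ^ c.1 * y ^ c.2) =
      ∑' b, (s * y) ^ b + (s * x * ∑' a, (s * x) ^ a +
        s * (x * y) * ∑' c : ℕ × ℕ, s ^ max c.1 c.2 * (x ^ c.1 * y ^ c.2)) := by
  let f (a b : ℕ) : R⟦X⟧ := s ^ max a b * (x ^ a * y ^ b)
  have hrow (a : ℕ) : Summable (f a) :=
    (summable_pow_mul hy fun b ↦ s ^ max a b * x ^ a).congr fun b ↦ by simp only [f]; ring
  have hsum := (summable_pow_max_mul (x := x) hs hy).hasSum.prod_fiberwise fun a ↦ (hrow a).hasSum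
  have hpow : Summable fun a ↦ (s * x) ^ a := by
    simpa using summable_pow_mul (hs.mul_right x) 1
  have hsucc (a : ℕ) :
      ∑' b, f (a + 1) b = s * x * (s * x) ^ a + s * (x * y) * ∑' b, f a b := by
    rw [(hrow (a + 1)).tsum_eq_zero_add, ← (hrow a).tsum_mul_left]
    refine congr_arg₂ _ ?_ (tsum_congr fun b ↦ ?_)
    · simp only [f, Nat.max_zero]
      ring
    · simp only [f, Nat.add_max_add_right]
      ring
  have hrest : ∑' a, ∑' b, f (a + 1) b =
      s * x * ∑' a, (s * x) ^ a + s * (x * y) * ∑' a, ∑' b, f a b := by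
    rw [← hpow.tsum_mul_left, ← hsum.summable.tsum_mul_left,
      ← (hpow.mul_left _).tsum_add (hsum.summable.mul_left _)]
    exact tsum_congr hsucc
  rw [← hsum.tsum_eq]
  refine hsum.summable.tsum_eq_zero_add.trans (congr_arg₂ _ (tsum_congr fun b ↦ ?_) hrest)
  simp [f, mul_pow]

theorem one_sub_mul_tsum_pow_max_mul (hs : X ∣ s) (hy : X ∣ y) :
    (1 - s * x) * (1 - s * y) * (1 - s * (x * y)) *
      ∑' c : ℕ × ℕ, s ^ max c.1 c.2 * (x ^ c.1 * y ^ c.2) = 1 - s ^ 2 * (x * y) := by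
  have hgx := one_sub_mul_tsum_pow (hs.mul_right x)
  have hgy := one_sub_mul_tsum_pow (hs.mul_right y)
  linear_combination (1 - s * x) * (1 - s * y) * tsum_pow_max_mul_eq_add (x := x) hs hy +
    (1 - s * x) * hgy + s * x * (1 - s * y) * hgx

theorem steadySeries_eq_mul (hs : X ∣ s) (hy : X ∣ y) :
    steadySeries s x y = (∑' c : ℕ × ℕ, s ^ max c.1 c.2 * (x ^ c.1 * y ^ c.2)) *
      steadySeries (s * (x * y)) x y := by
  have hcons (c : (ℕ × ℕ) × SteadyPair) :
      s ^ (SteadyPair.consEquiv c).head * (x ^ (SteadyPair.consEquiv c).1.1.degree *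
        y ^ (SteadyPair.consEquiv c).1.2.degree) =
      s ^ max c.1.1 c.1.2 * (x ^ c.1.1 * y ^ c.1.2) *
        ((s * (x * y)) ^ c.2.head * (x ^ c.2.1.1.degree * y ^ c.2.1.2.degree)) := by
    simp only [SteadyPair.consEquiv, Equiv.coe_fn_mk, SteadyPair.head_cons,
      SteadyPair.degree_cons_left, SteadyPair.degree_cons_right]
    ring
  have hprod := SteadyPair.consEquiv.summable_iff.2 (summable_steadySeries (x := x) hs hy)
  rw [steadySeries, ← SteadyPair.consEquiv.tsum_eq, steadySeries,
    (summable_pow_max_mul hs hy).tsum_mul_tsum (summable_steadySeries (hs.mul_right _) hy)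
      (hprod.congr hcons)]
  exact tsum_congr hcons

theorem tendsto_steadySeries (hs : X ∣ s) (hy : X ∣ y) :
    Tendsto (fun j ↦ steadySeries (s * (x * y) ^ j) x y) atTop (𝓝 1) := by
  refine tendsto_of_X_pow_dvd_sub fun n ↦ ?_
  have h := X_pow_dvd_tsum_sub (n := n)
    (summable_steadySeries (x := x) (hs.mul_right ((x * y) ^ n)) hy) 0 fun p hp ↦ ?_
  · simpa [steadySeries, SteadyPair.head_zero, SteadyPair.coe_zero] using h
  · exact ((pow_dvd_pow_of_dvd (hy.mul_left x) n).mul_left s |>.trans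
      (dvd_pow_self _ (SteadyPair.head_ne_zero hp))).mul_right _

theorem qPochhammer_mul_steadySeries (hs : X ∣ s) (hy : X ∣ y) :
    qPochhammer (s * x) (x * y) * qPochhammer (s * y) (x * y) * qPochhammer (s * (x * y)) (x * y) *
      steadySeries s x y = qPochhammer (s ^ 2 * (x * y)) ((x * y) ^ 2) := by
  have hq : X ∣ x * y := hy.mul_left x
  have hx := multipliable_qPochhammer (s * x) hq
  have hy' := multipliable_qPochhammer (s * y) hq
  have hxy := multipliable_qPochhammer (s * (x * y)) hq
  have h := tprod_mul_eq_tprod_mul_of_recurrence ((hx.mul hy').mul hxy)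
    (multipliable_qPochhammer (s ^ 2 * (x * y)) (dvd_pow hq two_ne_zero))
    (tendsto_steadySeries (x := x) hs hy) fun j ↦ ?_
  · rw [(hx.mul hy').tprod_mul hxy, hx.tprod_mul hy', pow_zero, mul_one, mul_one] at h
    exact h
  · have hsj : X ∣ s * (x * y) ^ j := hs.mul_right _
    rw [steadySeries_eq_mul hsj hy, mul_assoc s _ (x * y), ← pow_succ]
    linear_combination steadySeries (s * (x * y) ^ (j + 1)) x y *
      one_sub_mul_tsum_pow_max_mul (x := x) hsj hy

end SteadySeries

section DbipSeries

variable {R : Type*} [CommRing R] [TopologicalSpace R]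

/-- The generating function of `D(m, n)` with `x` marking `m` and `y` marking `n`, written as a sum
over the objects counted in `Dbip_eq_card`. -/
noncomputable def dbipSeries (x y : R⟦X⟧) : R⟦X⟧ :=
  ∑' c : ℕ × SteadyPair, x ^ (c.2.head + c.2.1.1.degree) * y ^ (c.1 + (c.2.head + c.2.1.2.degree))

variable [DiscreteTopology R] {x y : R⟦X⟧}

theorem dbipSeries_eq_mul (hy : X ∣ y) :
    dbipSeries x y = (∑' b, y ^ b) * steadySeries (x * y) x y := by
  have hpow : Summable fun b ↦ y ^ b := by simpa using summable_pow_mul hy 1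
  have hterm (c : ℕ × SteadyPair) :
      x ^ (c.2.head + c.2.1.1.degree) * y ^ (c.1 + (c.2.head + c.2.1.2.degree)) =
        y ^ c.1 * ((x * y) ^ c.2.head * (x ^ c.2.1.1.degree * y ^ c.2.1.2.degree)) := by
    ring
  have hprod : Summable fun c : ℕ × SteadyPair ↦
      x ^ (c.2.head + c.2.1.1.degree) * y ^ (c.1 + (c.2.head + c.2.1.2.degree)) :=
    summable_of_X_pow_dvd tendsto_add_head_add_degree_cofinite_atTop
      fun c ↦ (pow_dvd_pow_of_dvd hy _).mul_left _
  rw [dbipSeries, steadySeries, hpow.tsum_mul_tsum (summable_steadySeries (hy.mul_left x) hy)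
    (hprod.congr hterm)]
  exact tsum_congr hterm

theorem dbipSeries_mul_qPochhammer (hy : X ∣ y) :
    dbipSeries x y * (qPochhammer (x * (x * y)) (x * y) * qPochhammer y (x * y) *
      qPochhammer (x * y) (x * y)) = qPochhammer (x * y) ((x * y) ^ 2) := by
  have hq : X ∣ x * y := hy.mul_left x
  have hsteady := qPochhammer_mul_steadySeries (x := x) hq hy
  have hgeom := one_sub_mul_tsum_pow hy
  rw [dbipSeries_eq_mul hy, qPochhammer_eq_one_sub_mul y hq, qPochhammer_eq_one_sub_mul (x * y) hq,
    qPochhammer_eq_one_sub_mul (x * y) (dvd_pow hq two_ne_zero)]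
  rw [← pow_succ, mul_comm (x * y) x, mul_comm (x * y) y] at hsteady
  rw [← pow_succ']
  linear_combination (1 - x * y) * hsteady + (1 - x * y) * steadySeries (x * y) x y *
    qPochhammer (x * (x * y)) (x * y) * qPochhammer (y * (x * y)) (x * y) *
    qPochhammer (x * y * (x * y)) (x * y) * hgeom

theorem dbipSeries_eq_cubicSeries_mul_crankSeries (z : R⟦X⟧ˣ) :
    dbipSeries (z : R⟦X⟧) ((↑z⁻¹ : R⟦X⟧) * X) = cubicSeries R * crankSeries z := by
  let A := qPochhammer ((z : R⟦X⟧) * X) X * qPochhammer ((↑z⁻¹ : R⟦X⟧) * X) X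
  let B : R⟦X⟧ := qPochhammer (X ^ 2) (X ^ 2)
  let P : R⟦X⟧ := qPochhammer X X
  let Q : R⟦X⟧ := qPochhammer X (X ^ 2)
  set F := dbipSeries (z : R⟦X⟧) ((↑z⁻¹ : R⟦X⟧) * X)
  set C := crankSeries z
  set K := cubicSeries R
  have hzX : (z : R⟦X⟧) * ((↑z⁻¹ : R⟦X⟧) * X) = X := by rw [← mul_assoc, z.mul_inv, one_mul]
  have hdbip : F * (A * P) = Q := by
    simpa only [hzX] using
      dbipSeries_mul_qPochhammer (x := (z : R⟦X⟧)) (dvd_mul_left X (↑z⁻¹ : R⟦X⟧))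
  have hcrank : C * A = P := crankSeries_mul_qPochhammer z
  have hcubic : K * (P * B) = 1 := cubicSeries_mul_qPochhammer R
  have hsplit : Q * B = P := by
    simpa only [← sq] using qPochhammer_sq_mul_qPochhammer_sq X (dvd_refl (X : R⟦X⟧))
  have hFA : F * A = K * C * A := by
    linear_combination (-F * A) * hcubic + B * K * hdbip + K * hsplit - K * hcrank
  have hA : A * (F * B) = 1 := by
    linear_combination B * hFA + B * K * hcrank + hcubic
  linear_combination (F * B) * hFA - (F - K * C) * hA

end DbipSeries

/-! ### Extraction of coefficients -/

theorem C_mul_X_pow_eq_monomial {R : Type*} [Semiring R] (a : R) (n : ℕ) :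
    PowerSeries.C a * X ^ n = monomial n a := by
  rw [X_pow_eq, ← monomial_zero_eq_C_apply, monomial_mul_monomial, zero_add, mul_one]

section LaurentCoefficients

/-- The variable `T` of the Laurent polynomials as a unit of the power series over them. -/
noncomputable def unitT : (ℤ[T;T⁻¹]⟦X⟧)ˣ where
  val := PowerSeries.C (T 1)
  inv := PowerSeries.C (T (-1))
  val_inv := by rw [← map_mul, ← T_add, add_neg_cancel, T_zero, map_one]
  inv_val := by rw [← map_mul, ← T_add, neg_add_cancel, T_zero, map_one]

theorem coe_unitT_zpow (k : ℤ) :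
    ((unitT ^ k : (ℤ[T;T⁻¹]⟦X⟧)ˣ) : ℤ[T;T⁻¹]⟦X⟧) = PowerSeries.C (T k) := by
  have hpos (n : ℕ) : ((unitT ^ n : (ℤ[T;T⁻¹]⟦X⟧)ˣ) : ℤ[T;T⁻¹]⟦X⟧) = PowerSeries.C (T n) := by
    rw [Units.val_pow_eq_pow_val, unitT, ← map_pow, T_pow, mul_one]
  obtain ⟨n, rfl | rfl⟩ := k.eq_nat_or_neg
  · rw [zpow_natCast, hpos]
  · rw [zpow_neg, zpow_natCast, ← inv_pow, Units.val_pow_eq_pow_val]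
    change PowerSeries.C (T (-1)) ^ n = _
    rw [← map_pow, T_pow, mul_neg_one]

theorem crankTerm_unitT (s : Multiset ℕ) :
    crankTerm unitT s = monomial (s.map (· + 1)).sum (T (partsCrank (s.map (· + 1)))) := by
  rw [crankTerm, coe_unitT_zpow, C_mul_X_pow_eq_monomial]

theorem unitT_pow_mul_inv_mul_X_pow (a b : ℕ) :
    (unitT : ℤ[T;T⁻¹]⟦X⟧) ^ a * ((↑unitT⁻¹ : ℤ[T;T⁻¹]⟦X⟧) * X) ^ b =
      monomial b (T ((a : ℤ) - b)) := by
  have hunit : unitT ^ ((a : ℤ) - b) = unitT ^ a * unitT⁻¹ ^ b := by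
    rw [zpow_sub, zpow_natCast, zpow_natCast, inv_pow]
  rw [← C_mul_X_pow_eq_monomial, ← coe_unitT_zpow, hunit, Units.val_mul, Units.val_pow_eq_pow_val,
    Units.val_pow_eq_pow_val, mul_pow, mul_assoc]

theorem card_crank_eq (m : ℤ) (n : ℕ) :
    Nat.card {l : n.Partition // crank l = m} = Nat.card {s : Multiset ℕ //
      (s.map (· + 1)).sum = n ∧ partsCrank (s.map (· + 1)) = m} := by
  symm
  let f : {s : Multiset ℕ // (s.map (· + 1)).sum = n ∧ partsCrank (s.map (· + 1)) = m} →
      {l : n.Partition // crank l = m} := fun s ↦ ⟨⟨s.1.map (· + 1), by simp, s.2.1⟩, s.2.2⟩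
  refine Nat.card_eq_of_bijective f ⟨fun s t h ↦ Subtype.ext ?_, fun l ↦ ?_⟩
  · exact Multiset.map_injective (add_left_injective 1)
      (congr_arg (fun l : {l : n.Partition // crank l = m} ↦ l.1.parts) h)
  · have hparts : (l.1.parts.map (· - 1)).map (· + 1) = l.1.parts := by
      rw [Multiset.map_map]
      exact (Multiset.map_congr rfl fun i hi ↦ Nat.sub_add_cancel (l.1.parts_pos hi)).trans
        (Multiset.map_id' _)
    refine ⟨⟨l.1.parts.map (· - 1), by rw [hparts, l.1.parts_sum], by rw [hparts]; exact l.2⟩, ?_⟩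
    exact Subtype.ext (Nat.Partition.ext hparts)

theorem card_crank_eq_of_one (m : ℤ) :
    Nat.card {l : Nat.Partition 1 // crank l = m} = if m = -1 then 1 else 0 := by
  have hcrank (l : Nat.Partition 1) : crank l = -1 := by
    rw [Unique.eq_default l, crank]
    simp
  simp only [hcrank, eq_comm (b := m)]
  split_ifs with hm <;> simp [hm]

theorem crankM_eq_card_add (m : ℤ) (n : ℕ) :
    crankM m n = Nat.card {l : n.Partition // crank l = m} +
      if n = 1 then (T 1 - 1 : ℤ[T;T⁻¹]).coeff m else 0 := by
  have hcoeff : (T 1 - 1 : ℤ[T;T⁻¹]).coeff m =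
      (if 1 = m then 1 else 0) - if 0 = m then 1 else 0 := by
    rw [← T_zero, AddMonoidAlgebra.coeff_sub, Finsupp.sub_apply, T_apply, T_apply]
  rw [crankM]
  obtain rfl | hn := eq_or_ne n 1
  · rw [if_pos rfl, if_pos rfl, card_crank_eq_of_one, hcoeff]
    split_ifs <;> lia
  · rw [if_neg hn, if_neg hn, add_zero]

variable [TopologicalSpace ℤ[T;T⁻¹]] [DiscreteTopology ℤ[T;T⁻¹]]

theorem coeff_coeff_crankSeries (m : ℤ) (n : ℕ) :
    (coeff n (crankSeries unitT)).coeff m = crankM m n := by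
  have hlinear : ((unitT : ℤ[T;T⁻¹]⟦X⟧) - 1) * X = monomial 1 (T 1 - 1) := by
    rw [unitT, ← map_one PowerSeries.C, ← map_sub, ← pow_one X,
      C_mul_X_pow_eq_monomial]
  rw [crankSeries, hlinear, map_add, AddMonoidAlgebra.coeff_add, Finsupp.add_apply,
    crankM_eq_card_add, card_crank_eq,
    ← coeff_coeff_tsum_monomial_T tendsto_sum_map_succ_cofinite_atTop, coeff_monomial]
  simp only [crankTerm_unitT]
  split_ifs <;> rfl

theorem coeff_coeff_dbipSeries (m n : ℕ) :
    (coeff n (dbipSeries (unitT : ℤ[T;T⁻¹]⟦X⟧) ((↑unitT⁻¹ : ℤ[T;T⁻¹]⟦X⟧) * X))).coeff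
      ((m : ℤ) - n) = Dbip m n := by
  simp only [dbipSeries, unitT_pow_mul_inv_mul_X_pow]
  rw [coeff_coeff_tsum_monomial_T tendsto_add_head_add_degree_cofinite_atTop, Dbip_eq_card]
  refine congr_arg _ (Nat.card_congr (Equiv.subtypeEquivRight fun c ↦ and_congr_right fun hc ↦ ?_))
  lia

theorem coeff_coeff_cubicSeries_mul_crankSeries (m : ℤ) (n : ℕ) :
    (coeff n (cubicSeries ℤ[T;T⁻¹] * crankSeries unitT)).coeff m =
      ∑ ℓ ∈ range (n + 1), (cubicPartition (n - ℓ) : ℤ) * crankM m ℓ := by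
  have hterm (k ℓ : ℕ) : (coeff k (cubicSeries ℤ[T;T⁻¹]) * coeff ℓ (crankSeries unitT)).coeff m =
      cubicPartition k * crankM m ℓ := by
    rw [coeff_cubicSeries, ← coeff_coeff_crankSeries, ← nsmul_eq_mul,
      AddMonoidAlgebra.coeff_smul, Finsupp.smul_apply, nsmul_eq_mul]
  rw [mul_comm, coeff_mul, Nat.sum_antidiagonal_eq_sum_range_succ_mk, AddMonoidAlgebra.coeff_sum,
    Finsupp.finsetSum_apply]
  exact Finset.sum_congr rfl fun ℓ _ ↦ by rw [mul_comm, hterm]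

end LaurentCoefficients

/-- `D(m,n) = Σ_{0 ≤ ℓ ≤ n} c(n - ℓ) · M(m - n, ℓ)`. -/
theorem Dbip_eq_sum_cubic_crankM (m n : ℕ) :
    Dbip m n = ∑ ℓ ∈ Finset.range (n + 1),
      (cubicPartition (n - ℓ) : ℤ) * crankM ((m : ℤ) - n) ℓ := by
  let : TopologicalSpace ℤ[T;T⁻¹] := ⊥
  have : DiscreteTopology ℤ[T;T⁻¹] := ⟨rfl⟩
  rw [← coeff_coeff_dbipSeries, dbipSeries_eq_cubicSeries_mul_crankSeries,
    coeff_coeff_cubicSeries_mul_crankSeries]
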